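/- Let μ and η be probability measures on ℝ^d with finite absolute first moments. For θ ∈ ℝ^d let μ_θ and η_θ denote the pushforwards of μ and η under x ↦ ⟨θ, x⟩. Then the map θ ↦ W_1(μ_θ, η_θ) is L-Lipschitz on the unit sphere S^{d−1} with L = M_1(μ) + M_1(η); that is, for all θ_1, θ_2 ∈ S^{d−1}, |W_1(μ_{θ_1}, η_{θ_1}) − W_1(μ_{θ_2}, η_{θ_2})| ≤ (M_1(μ) + M_1(η)) · ‖θ_1 − θ_2‖. -/

import Mathlib

open MeasureTheory

/-- The 1-Wasserstein distance between measures on `ℝ`, in dual form. -/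
noncomputable def W1 (μ ν : Measure ℝ) : ℝ :=
  ⨆ f : {f : ℝ → ℝ // LipschitzWith 1 f},
    |∫ x, (f : ℝ → ℝ) x ∂μ - ∫ x, (f : ℝ → ℝ) x ∂ν|

theorem W1_aux_integrable {d : ℕ} (μ : Measure (EuclideanSpace ℝ (Fin d)))
    [IsProbabilityMeasure μ] (hμ : Integrable (fun x => ‖x‖) μ)
    (θ : EuclideanSpace ℝ (Fin d)) (f : ℝ → ℝ) (hf : LipschitzWith 1 f) :
    Integrable (fun x => f (inner ℝ θ x)) μ := by
  have hc := hf.continuous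
  refine Integrable.mono' ((hμ.const_mul ‖θ‖).add (integrable_const |f 0|))
    (Continuous.aestronglyMeasurable (by fun_prop)) (Filter.Eventually.of_forall fun x => ?_)
  have h1 := hf.dist_le_mul (inner ℝ θ x) 0
  simp only [Real.dist_eq, NNReal.coe_one, one_mul, sub_zero] at h1
  have h2 := abs_real_inner_le_norm θ x
  have h3 := abs_sub_abs_le_abs_sub (f (inner ℝ θ x)) (f 0)
  simp only [Real.norm_eq_abs, Pi.add_apply]
  linarith

theorem W1_aux_single {d : ℕ} (μ : Measure (EuclideanSpace ℝ (Fin d)))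
    [IsProbabilityMeasure μ] (hμ : Integrable (fun x => ‖x‖) μ)
    (θ₁ θ₂ : EuclideanSpace ℝ (Fin d)) (f : ℝ → ℝ) (hf : LipschitzWith 1 f) :
    |∫ x, f x ∂(μ.map (fun x => (inner ℝ θ₁ x : ℝ))) -
      ∫ x, f x ∂(μ.map (fun x => (inner ℝ θ₂ x : ℝ)))| ≤ (∫ x, ‖x‖ ∂μ) * ‖θ₁ - θ₂‖ := by
  have hc := hf.continuous
  rw [integral_map (Continuous.aemeasurable (by fun_prop)) hc.aestronglyMeasurable,
    integral_map (Continuous.aemeasurable (by fun_prop)) hc.aestronglyMeasurable,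
    ← integral_sub (W1_aux_integrable μ hμ θ₁ f hf) (W1_aux_integrable μ hμ θ₂ f hf),
    ← integral_mul_const, ← Real.norm_eq_abs]
  refine norm_integral_le_of_norm_le (hμ.mul_const _) (Filter.Eventually.of_forall fun x => ?_)
  have h1 := hf.dist_le_mul (inner ℝ θ₁ x) (inner ℝ θ₂ x)
  simp only [Real.dist_eq, NNReal.coe_one, one_mul, ← inner_sub_left] at h1
  have h2 := abs_real_inner_le_norm (θ₁ - θ₂) x
  simp only [Real.norm_eq_abs]
  linarith

theorem W1_aux_pair {d : ℕ} (μ η : Measure (EuclideanSpace ℝ (Fin d)))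
    [IsProbabilityMeasure μ] [IsProbabilityMeasure η]
    (hμ : Integrable (fun x => ‖x‖) μ) (hη : Integrable (fun x => ‖x‖) η)
    (θ₁ θ₂ : EuclideanSpace ℝ (Fin d)) (f : ℝ → ℝ) (hf : LipschitzWith 1 f) :
    |∫ x, f x ∂(μ.map (fun x => (inner ℝ θ₁ x : ℝ))) -
      ∫ x, f x ∂(η.map (fun x => (inner ℝ θ₁ x : ℝ)))| ≤
    |∫ x, f x ∂(μ.map (fun x => (inner ℝ θ₂ x : ℝ))) -
      ∫ x, f x ∂(η.map (fun x => (inner ℝ θ₂ x : ℝ)))| +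
      ((∫ x, ‖x‖ ∂μ) + ∫ x, ‖x‖ ∂η) * ‖θ₁ - θ₂‖ := by
  have h1 := abs_le.1 (W1_aux_single μ hμ θ₁ θ₂ f hf)
  have h2 := abs_le.1 (W1_aux_single η hη θ₁ θ₂ f hf)
  rw [add_mul]
  generalize ∫ x, f x ∂(μ.map (fun x => (inner ℝ θ₂ x : ℝ))) = a at *
  generalize ∫ x, f x ∂(η.map (fun x => (inner ℝ θ₂ x : ℝ))) = b at *
  have h3 := le_abs_self (a - b)
  have h4 := neg_abs_le (a - b)
  rw [abs_le]
  constructor <;> linarith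

theorem W1_aux_bdd {d : ℕ} (μ η : Measure (EuclideanSpace ℝ (Fin d)))
    [IsProbabilityMeasure μ] [IsProbabilityMeasure η]
    (hμ : Integrable (fun x => ‖x‖) μ) (hη : Integrable (fun x => ‖x‖) η)
    (θ : EuclideanSpace ℝ (Fin d)) :
    BddAbove (Set.range fun f : {f : ℝ → ℝ // LipschitzWith 1 f} =>
      |∫ x, (f : ℝ → ℝ) x ∂(μ.map (fun x => (inner ℝ θ x : ℝ))) -
        ∫ x, (f : ℝ → ℝ) x ∂(η.map (fun x => (inner ℝ θ x : ℝ)))|) := by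
  refine ⟨((∫ x, ‖x‖ ∂μ) + ∫ x, ‖x‖ ∂η) * ‖θ - 0‖, ?_⟩
  rintro _ ⟨f, rfl⟩
  have h := W1_aux_pair μ η hμ hη θ 0 f f.2
  simpa [Measure.map_const] using h

theorem W1_aux_le {d : ℕ} (μ η : Measure (EuclideanSpace ℝ (Fin d)))
    [IsProbabilityMeasure μ] [IsProbabilityMeasure η]
    (hμ : Integrable (fun x => ‖x‖) μ) (hη : Integrable (fun x => ‖x‖) η)
    (θ₁ θ₂ : EuclideanSpace ℝ (Fin d)) :
    W1 (μ.map (fun x => (inner ℝ θ₁ x : ℝ))) (η.map (fun x => (inner ℝ θ₁ x : ℝ))) ≤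
      W1 (μ.map (fun x => (inner ℝ θ₂ x : ℝ))) (η.map (fun x => (inner ℝ θ₂ x : ℝ))) +
      ((∫ x, ‖x‖ ∂μ) + ∫ x, ‖x‖ ∂η) * ‖θ₁ - θ₂‖ := by
  haveI : Nonempty {f : ℝ → ℝ // LipschitzWith 1 f} := ⟨⟨id, LipschitzWith.id⟩⟩
  refine ciSup_le fun f => (W1_aux_pair μ η hμ hη θ₁ θ₂ f f.2).trans ?_
  have := le_ciSup (W1_aux_bdd μ η hμ hη θ₂) f
  exact add_le_add_left this _

/-- The map `θ ↦ W₁(μ_θ, η_θ)` is `(M₁(μ) + M₁(η))`-Lipschitz on the unit sphere. -/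
theorem projection_W1_lipschitz_on_sphere
    {d : ℕ} (μ η : Measure (EuclideanSpace ℝ (Fin d)))
    [IsProbabilityMeasure μ] [IsProbabilityMeasure η]
    (hμ : Integrable (fun x => ‖x‖) μ) (hη : Integrable (fun x => ‖x‖) η)
    (θ₁ θ₂ : EuclideanSpace ℝ (Fin d)) (hθ₁ : ‖θ₁‖ = 1) (hθ₂ : ‖θ₂‖ = 1) :
    |W1 (μ.map (fun x => (inner ℝ θ₁ x : ℝ))) (η.map (fun x => (inner ℝ θ₁ x : ℝ))) -
      W1 (μ.map (fun x => (inner ℝ θ₂ x : ℝ))) (η.map (fun x => (inner ℝ θ₂ x : ℝ)))| ≤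
      ((∫ x, ‖x‖ ∂μ) + ∫ x, ‖x‖ ∂η) * ‖θ₁ - θ₂‖ := by
  have h1 := W1_aux_le μ η hμ hη θ₁ θ₂
  have h2 := W1_aux_le μ η hμ hη θ₂ θ₁
  rw [norm_sub_rev θ₂ θ₁] at h2
  rw [abs_le]
  constructor <;> linarith
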